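/- arXiv:2310.08603 — 4 statements merged into one kernel-verified Lean document; each statement's English description precedes it below -/
import Mathlib

section
/- (Sufficient and necessary condition, 1-dimensional case.) Under the one-dimensional two-step trust-region setup with a < 0, b < 0, a + ω₂ > 0, b + ω̃₂ > 0, x̃₁ ≠ x₁, and κ := (x₁ − x₀)/(x̃₁ − x₁), and for any ε with 0 ≤ ε ≤ 1, the inequality |x̃₂ − x₂| ≤ ε |x̃₁ − x₁| holds if and only if either [(b + ω̃₂)ω₁ > (a + ω₂)ω̃₁ and κ₁ ≤ κ ≤ κ₂] or [(b + ω̃₂)ω₁ < (a + ω₂)ω̃₁ and κ₂ ≤ κ ≤ κ₁], where κ₁ = (a + ω₂)[(1 − ε)(b + ω̃₂) + ω̃₁] / [(b + ω̃₂)ω₁ − (a + ω₂)ω̃₁] and κ₂ = (a + ω₂)[(1 + ε)(b + ω̃₂) + ω̃₁] / [(b + ω̃₂)ω₁ − (a + ω₂)ω̃₁]. -/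
/-- Sufficient and necessary condition for distance reduction, 1-dimensional case. -/
theorem stmt_2 (a b gf gQ x₀ ω₁ ω₁t ω₂ ω₂t ε : ℝ)
    (hω₁ : 0 < ω₁) (hω₁t : 0 < ω₁t) (hω₂ : 0 < ω₂) (hω₂t : 0 < ω₂t)
    (ha1 : a + ω₁ ≠ 0) (hb1 : b + ω₁t ≠ 0)
    (ha : a < 0) (hb : b < 0) (ha2 : 0 < a + ω₂) (hb2 : 0 < b + ω₂t)
    (x₁ x₁t x₂ x₂t : ℝ)
    (hx₁ : x₁ = x₀ - gf / (a + ω₁))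
    (hx₁t : x₁t = x₀ - gQ / (b + ω₁t))
    (hx₂ : x₂ = x₁ - (gf + a * (x₁ - x₀)) / (a + ω₂))
    (hx₂t : x₂t = x₁t - (gQ + b * (x₁t - x₀)) / (b + ω₂t))
    (hne : x₁t ≠ x₁)
    (κ : ℝ) (hκ : κ = (x₁ - x₀) / (x₁t - x₁))
    (hε : 0 ≤ ε) (hε1 : ε ≤ 1)
    (κ₁ κ₂ : ℝ)
    (hκ₁ : κ₁ = (a + ω₂) * ((1 - ε) * (b + ω₂t) + ω₁t) /
      ((b + ω₂t) * ω₁ - (a + ω₂) * ω₁t))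
    (hκ₂ : κ₂ = (a + ω₂) * ((1 + ε) * (b + ω₂t) + ω₁t) /
      ((b + ω₂t) * ω₁ - (a + ω₂) * ω₁t)) :
    |x₂t - x₂| ≤ ε * |x₁t - x₁| ↔
      ((b + ω₂t) * ω₁ > (a + ω₂) * ω₁t ∧ κ₁ ≤ κ ∧ κ ≤ κ₂) ∨
      ((b + ω₂t) * ω₁ < (a + ω₂) * ω₁t ∧ κ₂ ≤ κ ∧ κ ≤ κ₁) := by
  have hd : x₁t - x₁ ≠ 0 := sub_ne_zero.mpr hne
  have h1 : gf = -(a + ω₁) * (x₁ - x₀) := by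
    rw [hx₁]; field_simp; ring
  have h1t : gQ = -(b + ω₁t) * (x₁t - x₀) := by
    rw [hx₁t]; field_simp; ring
  have hk : x₁ - x₀ = κ * (x₁t - x₁) := by
    rw [hκ]; field_simp
  have hkt : x₁t - x₀ = (κ + 1) * (x₁t - x₁) := by linarith
  have e1 : gf + a * (x₁ - x₀) = -ω₁ * (κ * (x₁t - x₁)) := by
    rw [← hk, h1]; ring
  have e1t : gQ + b * (x₁t - x₀) = -ω₁t * ((κ + 1) * (x₁t - x₁)) := by
    rw [← hkt, h1t]; ring
  rw [e1] at hx₂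
  rw [e1t] at hx₂t
  generalize hA : a + ω₂ = A at *
  generalize hB : b + ω₂t = B at *
  have hAB : 0 < A * B := mul_pos ha2 hb2
  have key : x₂t - x₂ =
      (A * (B + ω₁t) - κ * (B * ω₁ - A * ω₁t)) / (A * B) * (x₁t - x₁) := by
    rw [hx₂t, hx₂]; field_simp; ring
  have main : |x₂t - x₂| ≤ ε * |x₁t - x₁| ↔
      A * ((1 - ε) * B + ω₁t) ≤ κ * (B * ω₁ - A * ω₁t) ∧
      κ * (B * ω₁ - A * ω₁t) ≤ A * ((1 + ε) * B + ω₁t) := by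
    rw [key, abs_mul, mul_le_mul_iff_left₀ (abs_pos.mpr hd), abs_div, abs_of_pos hAB,
      div_le_iff₀ hAB, abs_le]
    constructor <;> rintro ⟨p, q⟩ <;> constructor <;> linarith
  rw [main, hκ₁, hκ₂]
  rcases lt_trichotomy (B * ω₁) (A * ω₁t) with h | h | h
  · have hD : B * ω₁ - A * ω₁t < 0 := by linarith
    simp only [div_le_iff_of_neg hD, le_div_iff_of_neg hD]
    constructor
    · rintro ⟨p, q⟩; exact Or.inr ⟨h, q, p⟩
    · rintro (⟨p, _⟩ | ⟨_, q, p⟩)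
      · exact absurd h (not_lt.mpr p.le)
      · exact ⟨p, q⟩
  · have hpos : 0 < A * ((1 - ε) * B + ω₁t) :=
      mul_pos ha2 (add_pos_of_nonneg_of_pos (mul_nonneg (by linarith) hb2.le) hω₁t)
    constructor
    · rintro ⟨p, _⟩
      rw [h, sub_self, mul_zero] at p
      linarith
    · rintro (⟨p, _⟩ | ⟨p, _⟩) <;> linarith
  · have hD : 0 < B * ω₁ - A * ω₁t := by linarith
    rw [div_le_iff₀ hD, le_div_iff₀ hD]
    constructor
    · rintro ⟨p, q⟩; exact Or.inl ⟨h, p, q⟩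
    · rintro (⟨_, p, q⟩ | ⟨p, _⟩)
      · exact ⟨p, q⟩
      · exact absurd h (not_lt.mpr p.le)
end

section
/- Under the one-dimensional two-step trust-region setup with a < 0, b < 0, a + ω₂ > 0, b + ω̃₂ > 0 and x̃₁ ≠ x₁, if κ := (x₁ − x₀)/(x̃₁ − x₁) satisfies −1 < κ < 0 (equivalently, x̃₁ ≤ x₀ < x₁ or x₁ < x₀ ≤ x̃₁), then there does not exist an ε with 0 < ε < 1 such that |x̃₂ − x₂| ≤ ε |x̃₁ − x₁|; that is, for every ε with 0 < ε < 1 one has |x̃₂ − x₂| > ε |x̃₁ − x₁|. -/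
/-- 1-dimensional case: if `−1 < κ < 0` then no `ε ∈ (0,1)` gives the
contraction `|x̃₂ − x₂| ≤ ε |x̃₁ − x₁|`. -/
theorem stmt_4 (a b gf gQ x₀ ω₁ ω₁t ω₂ ω₂t : ℝ)
    (hω₁ : 0 < ω₁) (hω₁t : 0 < ω₁t) (hω₂ : 0 < ω₂) (hω₂t : 0 < ω₂t)
    (ha1 : a + ω₁ ≠ 0) (hb1 : b + ω₁t ≠ 0)
    (ha : a < 0) (hb : b < 0) (ha2 : 0 < a + ω₂) (hb2 : 0 < b + ω₂t)
    (x₁ x₁t x₂ x₂t : ℝ)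
    (hx₁ : x₁ = x₀ - gf / (a + ω₁))
    (hx₁t : x₁t = x₀ - gQ / (b + ω₁t))
    (hx₂ : x₂ = x₁ - (gf + a * (x₁ - x₀)) / (a + ω₂))
    (hx₂t : x₂t = x₁t - (gQ + b * (x₁t - x₀)) / (b + ω₂t))
    (hne : x₁t ≠ x₁)
    (κ : ℝ) (hκ : κ = (x₁ - x₀) / (x₁t - x₁))
    (hκneg : -1 < κ) (hκ₀ : κ < 0) :
    ∀ ε : ℝ, 0 < ε → ε < 1 → ε * |x₁t - x₁| < |x₂t - x₂| := by
  intro ε hε0 hε1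
  have hd : x₁t - x₁ ≠ 0 := sub_ne_zero.mpr hne
  have hu : x₁ - x₀ = κ * (x₁t - x₁) := by
    rw [hκ, div_mul_cancel₀ _ hd]
  have hv : x₁t - x₀ = (1 + κ) * (x₁t - x₁) := by linarith
  have hgf : gf = -(a + ω₁) * (x₁ - x₀) := by
    rw [hx₁]; field_simp; ring
  have hgQ : gQ = -(b + ω₁t) * (x₁t - x₀) := by
    rw [hx₁t]; field_simp; ring
  have e1 : x₂ = x₁ + ω₁ / (a + ω₂) * (κ * (x₁t - x₁)) := by
    have h : gf + a * (x₁ - x₀) = -(ω₁ * (x₁ - x₀)) := by rw [hgf]; ring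
    rw [hx₂, h, hu]; ring
  have e2 : x₂t = x₁t + ω₁t / (b + ω₂t) * ((1 + κ) * (x₁t - x₁)) := by
    have h : gQ + b * (x₁t - x₀) = -(ω₁t * (x₁t - x₀)) := by rw [hgQ]; ring
    rw [hx₂t, h, hv]; ring
  have hp : 0 < ω₁t / (b + ω₂t) := div_pos hω₁t hb2
  have hq : 0 < ω₁ / (a + ω₂) := div_pos hω₁ ha2
  have e3 : x₂t - x₂ =
      (1 + (1 + κ) * (ω₁t / (b + ω₂t)) + (-κ) * (ω₁ / (a + ω₂))) * (x₁t - x₁) := by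
    rw [e1, e2]; ring
  have h1 : 0 < (1 + κ) * (ω₁t / (b + ω₂t)) := mul_pos (by linarith) hp
  have h2 : 0 < (-κ) * (ω₁ / (a + ω₂)) := mul_pos (by linarith) hq
  rw [e3, abs_mul]
  apply mul_lt_mul_of_pos_right _ (abs_pos.mpr hd)
  rw [abs_of_pos (by linarith)]
  linarith
end

section
/- (Sufficient condition, n-dimensional diagonal Hessian case.) Under the n-dimensional diagonal two-step trust-region setup, suppose x̃₁ ≠ x₁ and there are real numbers κ⁽¹⁾, …, κ⁽ⁿ⁾ with κ⁽ⁱ⁾ (x̃₁⁽ⁱ⁾ − x₁⁽ⁱ⁾) = x₁⁽ⁱ⁾ − x₀⁽ⁱ⁾ for every i. Let 0 ≤ ε ≤ 1. If for every i ∈ {1, …, n} either [(b⁽ⁱ⁾ + ω̃₂)ω₁ > (a⁽ⁱ⁾ + ω₂)ω̃₁ and κ₁⁽ⁱ⁾ ≤ κ⁽ⁱ⁾ ≤ κ₂⁽ⁱ⁾] or [(b⁽ⁱ⁾ + ω̃₂)ω₁ < (a⁽ⁱ⁾ + ω₂)ω̃₁ and κ₂⁽ⁱ⁾ ≤ κ⁽ⁱ⁾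 ≤ κ₁⁽ⁱ⁾], where κ₁⁽ⁱ⁾ = (a⁽ⁱ⁾ + ω₂)[(1 − ε)(b⁽ⁱ⁾ + ω̃₂) + ω̃₁] / [(b⁽ⁱ⁾ + ω̃₂)ω₁ − (a⁽ⁱ⁾ + ω₂)ω̃₁] and κ₂⁽ⁱ⁾ = (a⁽ⁱ⁾ + ω₂)[(1 + ε)(b⁽ⁱ⁾ + ω̃₂) + ω̃₁] / [(b⁽ⁱ⁾ + ω̃₂)ω₁ − (a⁽ⁱ⁾ + ω₂)ω̃₁], then ‖x̃₂ − x₂‖₂ ≤ ε ‖x̃₁ − x₁‖₂ in the Euclidean norm. -/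
theorem diag_inv_mulVec {n : ℕ} (a v : Fin n → ℝ) (w : ℝ) (h : ∀ i, a i + w ≠ 0) (i : Fin n) :
    (Matrix.diagonal a + w • (1 : Matrix (Fin n) (Fin n) ℝ))⁻¹.mulVec v i = v i / (a i + w) := by
  have h1 : (Matrix.diagonal a + w • (1 : Matrix (Fin n) (Fin n) ℝ))⁻¹
      = Matrix.diagonal (fun i => (a i + w)⁻¹) := by
    apply Matrix.inv_eq_right_inv
    rw [Matrix.smul_one_eq_diagonal, Matrix.diagonal_add, Matrix.diagonal_mul_diagonal,
      ← Matrix.diagonal_one]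
    congr 1
    funext j
    exact mul_inv_cancel₀ (h j)
  rw [h1, Matrix.mulVec_diagonal]
  field_simp

/-- Sufficient condition for distance reduction in the `n`-dimensional
diagonal-Hessian two-step trust-region setting. -/
theorem stmt_6 (n : ℕ) (hn : 1 ≤ n) (a b : Fin n → ℝ) (gf gQ x₀ : Fin n → ℝ)
    (ω₁ ω₁t ω₂ ω₂t ε : ℝ)
    (hω₁ : 0 < ω₁) (hω₁t : 0 < ω₁t) (hω₂ : 0 < ω₂) (hω₂t : 0 < ω₂t)
    (ha1 : ∀ i, a i + ω₁ ≠ 0) (hb1 : ∀ i, b i + ω₁t ≠ 0)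
    (ha2 : ∀ i, 0 < a i + ω₂) (hb2 : ∀ i, 0 < b i + ω₂t)
    (x₁ x₁t x₂ x₂t : Fin n → ℝ)
    (hx₁ : x₁ = x₀ - (Matrix.diagonal a + ω₁ • 1)⁻¹.mulVec gf)
    (hx₁t : x₁t = x₀ - (Matrix.diagonal b + ω₁t • 1)⁻¹.mulVec gQ)
    (hx₂ : x₂ = x₁ -
      (Matrix.diagonal a + ω₂ • 1)⁻¹.mulVec (gf + (Matrix.diagonal a).mulVec (x₁ - x₀)))
    (hx₂t : x₂t = x₁t -
      (Matrix.diagonal b + ω₂t • 1)⁻¹.mulVec (gQ + (Matrix.diagonal b).mulVec (x₁t - x₀)))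
    (hne : x₁t ≠ x₁)
    (κ : Fin n → ℝ) (hκ : ∀ i, κ i * (x₁t i - x₁ i) = x₁ i - x₀ i)
    (hε : 0 ≤ ε) (hε1 : ε ≤ 1)
    (κ₁ κ₂ : Fin n → ℝ)
    (hκ₁ : ∀ i, κ₁ i = (a i + ω₂) * ((1 - ε) * (b i + ω₂t) + ω₁t) /
      ((b i + ω₂t) * ω₁ - (a i + ω₂) * ω₁t))
    (hκ₂ : ∀ i, κ₂ i = (a i + ω₂) * ((1 + ε) * (b i + ω₂t) + ω₁t) /
      ((b i + ω₂t) * ω₁ - (a i + ω₂) * ω₁t))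
    (hcond : ∀ i,
      ((b i + ω₂t) * ω₁ > (a i + ω₂) * ω₁t ∧ κ₁ i ≤ κ i ∧ κ i ≤ κ₂ i) ∨
      ((b i + ω₂t) * ω₁ < (a i + ω₂) * ω₁t ∧ κ₂ i ≤ κ i ∧ κ i ≤ κ₁ i)) :
    ‖(WithLp.equiv 2 (Fin n → ℝ)).symm (x₂t - x₂)‖ ≤
      ε * ‖(WithLp.equiv 2 (Fin n → ℝ)).symm (x₁t - x₁)‖ := by
  have key : ∀ i, |x₂t i - x₂ i| ≤ ε * |x₁t i - x₁ i| := by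
    intro i
    have e1 := congrFun hx₁ i
    have e2 := congrFun hx₁t i
    have e3 := congrFun hx₂ i
    have e4 := congrFun hx₂t i
    rw [Pi.sub_apply, diag_inv_mulVec _ _ _ ha1] at e1
    rw [Pi.sub_apply, diag_inv_mulVec _ _ _ hb1] at e2
    rw [Pi.sub_apply, diag_inv_mulVec _ _ _ (fun i => (ha2 i).ne'), Pi.add_apply,
      Matrix.mulVec_diagonal, Pi.sub_apply] at e3
    rw [Pi.sub_apply, diag_inv_mulVec _ _ _ (fun i => (hb2 i).ne'), Pi.add_apply,
      Matrix.mulVec_diagonal, Pi.sub_apply] at e4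
    have g1 : gf i = -((a i + ω₁) * (x₁ i - x₀ i)) := by
      rw [e1]; field_simp [ha1 i]; ring
    have g2 : gQ i = -((b i + ω₁t) * (x₁t i - x₀ i)) := by
      rw [e2]; field_simp [hb1 i]; ring
    have hA := ha2 i
    have hB := hb2 i
    have k := hκ i
    have hAB := mul_pos hA hB
    have hk : |(a i + ω₂) * (b i + ω₂t + ω₁t)
        - κ i * ((b i + ω₂t) * ω₁ - (a i + ω₂) * ω₁t)|
        ≤ ε * ((a i + ω₂) * (b i + ω₂t)) := by
      have q1 := hκ₁ i
      have q2 := hκ₂ i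
      rw [abs_le]
      rcases hcond i with ⟨h, l, u⟩ | ⟨h, l, u⟩
      · have hD : 0 < (b i + ω₂t) * ω₁ - (a i + ω₂) * ω₁t := by linarith
        rw [q1, div_le_iff₀ hD] at l
        rw [q2, le_div_iff₀ hD] at u
        constructor <;> linarith
      · have hD : (b i + ω₂t) * ω₁ - (a i + ω₂) * ω₁t < 0 := by linarith
        rw [q2, div_le_iff_of_neg hD] at l
        rw [q1, le_div_iff_of_neg hD] at u
        constructor <;> linarith
    have hd : x₂t i - x₂ i = ((a i + ω₂) * (b i + ω₂t + ω₁t)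
        - κ i * ((b i + ω₂t) * ω₁ - (a i + ω₂) * ω₁t)) / ((a i + ω₂) * (b i + ω₂t))
        * (x₁t i - x₁ i) := by
      have r3 : x₂ i = x₁ i + ω₁ * (x₁ i - x₀ i) / (a i + ω₂) := by
        rw [e3, g1]; ring
      have r4 : x₂t i = x₁t i + ω₁t * (x₁t i - x₀ i) / (b i + ω₂t) := by
        rw [e4, g2]; ring
      have s : x₁t i - x₀ i = κ i * (x₁t i - x₁ i) + (x₁t i - x₁ i) := by linarith
      rw [r3, r4, s, ← k]
      field_simp
      ring
    rw [hd, abs_mul, abs_div, abs_of_pos hAB]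
    apply mul_le_mul_of_nonneg_right _ (abs_nonneg _)
    rwa [div_le_iff₀ hAB]
  rw [EuclideanSpace.norm_eq, EuclideanSpace.norm_eq, ← Real.sqrt_sq hε,
    ← Real.sqrt_mul (sq_nonneg ε), Finset.mul_sum]
  apply Real.sqrt_le_sqrt
  apply Finset.sum_le_sum
  intro i _
  rw [← mul_pow]
  exact pow_le_pow_left₀ (norm_nonneg _) (key i) 2
end

section
/- Under the n-dimensional diagonal two-step trust-region setup, if K = Diag{κ⁽¹⁾, …, κ⁽ⁿ⁾} is a diagonal matrix with K(x̃₁ − x₁) = x₁ − x₀, then x̃₂ − x₂ = (I + ω̃₁ (B + ω̃₂I)⁻¹ (I + K) − ω₁ (A + ω₂I)⁻¹ K)(x̃₁ − x₁); equivalently, for each i, x̃₂⁽ⁱ⁾ − x₂⁽ⁱ⁾ = (1 + ω̃₁(1 + κ⁽ⁱ⁾)/(b⁽ⁱ⁾ + ω̃₂) − ω₁κ⁽ⁱ⁾/(a⁽ⁱ⁾ + ω₂)) · (x̃₁⁽ⁱ⁾ − x₁⁽ⁱ⁾). -/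
theorem inv_diag_shift {n : ℕ} (a : Fin n → ℝ) (w : ℝ) (h : ∀ i, a i + w ≠ 0) :
    (Matrix.diagonal a + w • (1 : Matrix (Fin n) (Fin n) ℝ))⁻¹
      = Matrix.diagonal (fun i => (a i + w)⁻¹) := by
  apply Matrix.inv_eq_right_inv
  rw [Matrix.smul_one_eq_diagonal, Matrix.diagonal_add, Matrix.diagonal_mul_diagonal,
    ← Matrix.diagonal_one]
  congr 1
  funext i
  exact mul_inv_cancel₀ (h i)

/-- In the `n`-dimensional diagonal two-step trust-region setup, if
`K (x̃₁ − x₁) = x₁ − x₀` for a diagonal matrix `K = Diag κ`, then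
`x̃₂ − x₂ = (I + ω̃₁ (B + ω̃₂I)⁻¹ (I + K) − ω₁ (A + ω₂I)⁻¹ K)(x̃₁ − x₁)`,
equivalently, componentwise
`x̃₂⁽ⁱ⁾ − x₂⁽ⁱ⁾ = (1 + ω̃₁(1 + κ⁽ⁱ⁾)/(b⁽ⁱ⁾ + ω̃₂) − ω₁κ⁽ⁱ⁾/(a⁽ⁱ⁾ + ω₂)) (x̃₁⁽ⁱ⁾ − x₁⁽ⁱ⁾)`. -/
theorem stmt_7 (n : ℕ) (hn : 1 ≤ n) (a b : Fin n → ℝ) (gf gQ x₀ : Fin n → ℝ)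
    (ω₁ ω₁t ω₂ ω₂t : ℝ)
    (hω₁ : 0 < ω₁) (hω₁t : 0 < ω₁t) (hω₂ : 0 < ω₂) (hω₂t : 0 < ω₂t)
    (ha1 : ∀ i, a i + ω₁ ≠ 0) (hb1 : ∀ i, b i + ω₁t ≠ 0)
    (ha2 : ∀ i, 0 < a i + ω₂) (hb2 : ∀ i, 0 < b i + ω₂t)
    (x₁ x₁t x₂ x₂t : Fin n → ℝ)
    (hx₁ : x₁ = x₀ - (Matrix.diagonal a + ω₁ • 1)⁻¹.mulVec gf)
    (hx₁t : x₁t = x₀ - (Matrix.diagonal b + ω₁t • 1)⁻¹.mulVec gQ)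
    (hx₂ : x₂ = x₁ -
      (Matrix.diagonal a + ω₂ • 1)⁻¹.mulVec (gf + (Matrix.diagonal a).mulVec (x₁ - x₀)))
    (hx₂t : x₂t = x₁t -
      (Matrix.diagonal b + ω₂t • 1)⁻¹.mulVec (gQ + (Matrix.diagonal b).mulVec (x₁t - x₀)))
    (κ : Fin n → ℝ)
    (hκ : (Matrix.diagonal κ).mulVec (x₁t - x₁) = x₁ - x₀) :
    x₂t - x₂ =
      (1 + ω₁t • ((Matrix.diagonal b + ω₂t • 1)⁻¹ * (1 + Matrix.diagonal κ))
        - ω₁ • ((Matrix.diagonal a + ω₂ • 1)⁻¹ * Matrix.diagonal κ)).mulVec (x₁t - x₁) ∧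
    ∀ i, x₂t i - x₂ i =
      (1 + ω₁t * (1 + κ i) / (b i + ω₂t) - ω₁ * κ i / (a i + ω₂)) * (x₁t i - x₁ i) := by
  have ha2' : ∀ i, a i + ω₂ ≠ 0 := fun i => (ha2 i).ne'
  have hb2' : ∀ i, b i + ω₂t ≠ 0 := fun i => (hb2 i).ne'
  rw [inv_diag_shift _ _ ha1] at hx₁
  rw [inv_diag_shift _ _ hb1] at hx₁t
  rw [inv_diag_shift _ _ ha2'] at hx₂
  rw [inv_diag_shift _ _ hb2'] at hx₂t
  rw [inv_diag_shift _ _ ha2', inv_diag_shift _ _ hb2']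
  have key : ∀ i, x₂t i - x₂ i =
      (1 + ω₁t * (1 + κ i) / (b i + ω₂t) - ω₁ * κ i / (a i + ω₂)) * (x₁t i - x₁ i) := by
    intro i
    have e1 := congrFun hx₁ i
    have e2 := congrFun hx₁t i
    have e3 := congrFun hx₂ i
    have e4 := congrFun hx₂t i
    have e5 := congrFun hκ i
    simp only [Pi.sub_apply, Pi.add_apply, Matrix.mulVec_diagonal] at e1 e2 e3 e4 e5
    have f1 : gf i + a i * (x₁ i - x₀ i) = -ω₁ * (κ i * (x₁t i - x₁ i)) := by
      have : (a i + ω₁) * (x₁ i - x₀ i) = - gf i := by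
        rw [e1]
        have := ha1 i
        field_simp
        ring
      rw [e5]
      linarith
    have f2 : gQ i + b i * (x₁t i - x₀ i) = -ω₁t * ((1 + κ i) * (x₁t i - x₁ i)) := by
      have : (b i + ω₁t) * (x₁t i - x₀ i) = - gQ i := by
        rw [e2]
        have := hb1 i
        field_simp
        ring
      have h3 : (1 + κ i) * (x₁t i - x₁ i) = x₁t i - x₀ i := by linarith
      rw [h3]
      linarith
    rw [f1] at e3
    rw [f2] at e4
    rw [e3, e4]
    ring
  refine ⟨?_, key⟩
  funext i
  rw [Pi.sub_apply, key i]
  simp only [Matrix.sub_mulVec, Matrix.add_mulVec, Matrix.smul_mulVec, ← Matrix.mulVec_mulVec,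
    Matrix.one_mulVec, Pi.sub_apply, Pi.add_apply, Pi.smul_apply, Matrix.mulVec_diagonal,
    smul_eq_mul]
  ring
end
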